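/- Let k be an algebraically closed field of characteristic p > 0. Every exponential matrix A(T) of Mat(n, k[T]) can be written as A(T) = Π_{i=1}^r Exp(T^{p^{i-1}}·N_i) for some r ≥ 1 and pairwise commuting matrices N₁, ..., N_r ∈ Mat(n, k) with N_i^p = 0 for all i. -/

import Mathlib

open Polynomial

/-- `A(T) ∈ Mat(n, k[T])` is an exponential matrix: `A(T)·A(T') = A(T+T')` in
`Mat(n, k[T,T'])` and `A(0) = I_n`. -/
def IsExpMat {k : Type*} [Field k] {n : ℕ}
    (A : Matrix (Fin n) (Fin n) (Polynomial k)) : Prop :=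
  A.map (fun q => aeval ((C X + X : Polynomial (Polynomial k))) q) =
    A.map (fun q => aeval ((C X : Polynomial (Polynomial k))) q) *
      A.map (fun q => aeval (X : Polynomial (Polynomial k)) q) ∧
  A.map (fun q => q.eval 0) = 1

/-- `Exp(T^m · N) = ∑_{j=0}^{p-1} T^{m j} N^j / j!`. -/
noncomputable def expT (k : Type*) [Field k] (n p m : ℕ)
    (N : Matrix (Fin n) (Fin n) k) : Matrix (Fin n) (Fin n) (Polynomial k) :=
  ∑ j ∈ Finset.range p, (C ((j.factorial : k)⁻¹) * X ^ (m * j)) • ((N ^ j).map C)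

/-!
The coefficient matrices of an exponential matrix `A = ∑ T ^ i A_i` form a sequence of divided
powers: `A_i A_j = (i + j).choose i • A_{i + j}`. In characteristic `p`, Lucas' theorem evaluates
these binomial coefficients: with `N_e = A_{p ^ e}` one gets `N_e ^ j = j! • A_{p ^ e * j}` and
`A_i * A_{p ^ e * j} = A_{i + p ^ e * j}` for `i < p ^ e`. The first identity with `j = p` gives
`N_e ^ p = 0`, and with `j < p` it identifies `Exp(T ^ (p ^ e) N_e)` with the part of `A` in the
degrees `p ^ e * j`; the second one multiplies these parts together along base-`p` expansions.
-/

/-- A sequence of divided powers: `a i` behaves like `x ^ i / i!`. The coefficient matrices of an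
exponential matrix are the example of interest. -/
structure IsDividedPowerSeq {R : Type*} [Semiring R] (a : ℕ → R) : Prop where
  zero : a 0 = 1
  mul_eq (i j : ℕ) : a i * a j = (i + j).choose i • a (i + j)

/-- The truncated exponential `∑_{j < p} (T ^ m * x) ^ j / j!` of an element `x` of a `k`-algebra
`R`, as a polynomial in a central variable `T`: the counterpart of `expT` in `R[X]`. -/
noncomputable def truncExp (k : Type*) {R : Type*} [Field k] [Semiring R] [Algebra k R]
    (p m : ℕ) (x : R) : R[X] :=
  ∑ j ∈ Finset.range p, monomial (m * j) ((j.factorial : k)⁻¹ • x ^ j)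

theorem sum_range_mul_eq_sum_sum {M : Type*} [AddCommMonoid M] (f : ℕ → M) (q d : ℕ) :
    ∑ i ∈ Finset.range (q * d), f i =
      ∑ j ∈ Finset.range d, ∑ i ∈ Finset.range q, f (i + q * j) := by
  induction d with
  | zero => simp
  | succ d ih =>
    rw [Nat.mul_succ, Finset.sum_range_add, Finset.sum_range_succ, ih]
    simp only [add_comm]

-- By Lucas' theorem: adding a multiple of `p ^ e` leaves the lowest `e` base-`p` digits unchanged.
theorem choose_add_prime_pow_mul_modEq_one {p : ℕ} [Fact p.Prime] {e i : ℕ} (hi : i < p ^ e)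
    (j : ℕ) : (i + p ^ e * j).choose i ≡ 1 [MOD p] := by
  induction e generalizing i with
  | zero =>
    obtain rfl : i = 0 := by simpa using hi
    simp [Nat.ModEq]
  | succ e ih =>
    have hp : 0 < p := (Fact.out : p.Prime).pos
    have hdigits : i + p ^ (e + 1) * j = i + p * (p ^ e * j) := by ring
    calc (i + p ^ (e + 1) * j).choose i
        ≡ (i % p).choose (i % p) * (i / p + p ^ e * j).choose (i / p) [MOD p] := by
          simpa only [hdigits, Nat.add_mul_mod_self_left, Nat.add_mul_div_left _ _ hp] using
            Choose.choose_modEq_choose_mod_mul_choose_div_nat (p := p)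
              (n := i + p * (p ^ e * j)) (k := i)
      _ = (i / p + p ^ e * j).choose (i / p) := by rw [Nat.choose_self, one_mul]
      _ ≡ 1 [MOD p] := ih (Nat.div_lt_of_lt_mul (by rwa [← pow_succ']))

theorem natCast_eq_zero_of_algebra (k R : Type*) [CommSemiring k] [Semiring R] [Algebra k R]
    (p : ℕ) [CharP k p] : (p : R) = 0 := by
  rw [← map_natCast (algebraMap k R), CharP.cast_eq_zero, map_zero]

namespace IsDividedPowerSeq

variable {R : Type*} [Semiring R] {a : ℕ → R}

theorem commute (ha : IsDividedPowerSeq a) (i j : ℕ) : Commute (a i) (a j) := by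
  rw [Commute, SemiconjBy, ha.mul_eq, ha.mul_eq, Nat.choose_symm_add, add_comm j]

variable {p : ℕ}

theorem mul_eq_of_modEq (ha : IsDividedPowerSeq a) (hpR : (p : R) = 0) {i j c : ℕ}
    (hc : (i + j).choose i ≡ c [MOD p]) : a i * a j = c • a (i + j) := by
  rw [ha.mul_eq]
  exact nsmul_eq_nsmul_of_modEq hc (by rw [nsmul_eq_mul, hpR, zero_mul])

variable [Fact p.Prime]

theorem mul_prime_pow_mul (ha : IsDividedPowerSeq a) (hpR : (p : R) = 0) {e i : ℕ}
    (hi : i < p ^ e) (j : ℕ) : a i * a (p ^ e * j) = a (i + p ^ e * j) := by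
  rw [ha.mul_eq_of_modEq hpR (choose_add_prime_pow_mul_modEq_one hi j), one_nsmul]

theorem pow_prime_pow (ha : IsDividedPowerSeq a) (hpR : (p : R) = 0) (e j : ℕ) :
    a (p ^ e) ^ j = j.factorial • a (p ^ e * j) := by
  induction j with
  | zero => simp [ha.zero]
  | succ j ih =>
    have hchoose : (p ^ e * j + p ^ e).choose (p ^ e * j) ≡ j + 1 [MOD p] := by
      simpa [mul_add_one] using
        Choose.choose_pow_mul_pow_mul_modEq_choose_nat (p := p) (k := e) (a := j + 1) (b := j)
    rw [pow_succ, ih, smul_mul_assoc, ha.mul_eq_of_modEq hpR hchoose, smul_smul, mul_comm,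
      ← Nat.factorial_succ, mul_add_one]

theorem pow_prime_pow_eq_zero (ha : IsDividedPowerSeq a) (hpR : (p : R) = 0) (e : ℕ) :
    a (p ^ e) ^ p = 0 := by
  obtain ⟨c, hc⟩ : p ∣ p.factorial := Nat.dvd_factorial (Fact.out : p.Prime).pos le_rfl
  rw [ha.pow_prime_pow hpR, hc, nsmul_eq_mul, Nat.cast_mul, hpR, zero_mul, zero_mul]

variable (k : Type*) [Field k] [CharP k p] [Algebra k R]

theorem truncExp_prime_pow (ha : IsDividedPowerSeq a) (e : ℕ) :
    truncExp k p (p ^ e) (a (p ^ e)) =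
      ∑ j ∈ Finset.range p, monomial (p ^ e * j) (a (p ^ e * j)) := by
  refine Finset.sum_congr rfl fun j hj ↦ ?_
  have hfac : (j.factorial : k) ≠ 0 :=
    (IsUnit.natCast_factorial_iff_of_charP p |>.mpr (Finset.mem_range.mp hj)).ne_zero
  rw [ha.pow_prime_pow (natCast_eq_zero_of_algebra k R p), ← Nat.cast_smul_eq_nsmul k,
    inv_smul_smul₀ hfac]

theorem prod_truncExp (ha : IsDividedPowerSeq a) (r : ℕ) :
    (List.ofFn fun e : Fin r ↦ truncExp k p (p ^ (e : ℕ)) (a (p ^ (e : ℕ)))).prod =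
      ∑ i ∈ Finset.range (p ^ r), monomial i (a i) := by
  induction r with
  | zero => simp [ha.zero]
  | succ r ih =>
    have hmonomial (i j : ℕ) (hi : i ∈ Finset.range (p ^ r)) :
        monomial i (a i) * monomial (p ^ r * j) (a (p ^ r * j)) =
          monomial (i + p ^ r * j) (a (i + p ^ r * j)) := by
      rw [monomial_mul_monomial, ha.mul_prime_pow_mul (natCast_eq_zero_of_algebra k R p)
        (Finset.mem_range.mp hi)]
    rw [List.ofFn_succ', List.concat_eq_append, List.prod_append, List.prod_singleton]
    simp only [Fin.val_castSucc, Fin.val_last]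
    rw [ih, ha.truncExp_prime_pow k, pow_succ, sum_range_mul_eq_sum_sum, Finset.sum_mul_sum,
      Finset.sum_comm]
    exact Finset.sum_congr rfl fun j _ ↦ Finset.sum_congr rfl fun i hi ↦ hmonomial i j hi

theorem eq_prod_truncExp {P : R[X]} (hP : IsDividedPowerSeq P.coeff) {r : ℕ}
    (hr : P.natDegree < p ^ r) :
    P = (List.ofFn fun e : Fin r ↦ truncExp k p (p ^ (e : ℕ)) (P.coeff (p ^ (e : ℕ)))).prod := by
  rw [hP.prod_truncExp k]
  exact P.as_sum_range' _ hr

end IsDividedPowerSeq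

theorem map_hasseDeriv {R S : Type*} [Semiring R] [Semiring S] (f : R →+* S) (q : R[X])
    (j : ℕ) : (hasseDeriv j q).map f = hasseDeriv j (q.map f) := by
  ext i
  simp [hasseDeriv_coeff]

section Bivariate

variable {R : Type*} [CommSemiring R]

-- Expanding `q(T + T')` in powers of `T'` is Taylor's formula.
theorem coeff_aeval_C_X_add_X (q : R[X]) (j : ℕ) :
    (aeval (C X + X : R[X][X]) q).coeff j = hasseDeriv j q := by
  have htaylor : aeval (C X + X : R[X][X]) q = taylor X (q.map C) := by
    rw [taylor_apply, comp, eval₂_map, add_comm, aeval_def]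
    rfl
  rw [htaylor, taylor_coeff, ← map_hasseDeriv, eval_map, eval₂_C_X]

theorem aeval_C_X (q : R[X]) : aeval (C X : R[X][X]) q = C q := by
  rw [← algebraMap_eq, aeval_algebraMap_apply, aeval_X_left_apply]

end Bivariate

section ExponentialMatrix

variable {k : Type*} [Field k] {n : ℕ}

theorem matPolyEquiv_expT (p m : ℕ) (N : Matrix (Fin n) (Fin n) k) :
    matPolyEquiv (expT k n p m N) = truncExp k p m N := by
  simp only [expT, truncExp, map_sum]
  refine Finset.sum_congr rfl fun j _ ↦ ?_
  ext i s t
  rw [matPolyEquiv_coeff_apply, Matrix.smul_apply, Matrix.map_apply, smul_eq_mul, mul_right_comm,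
    ← C_mul, coeff_C_mul_X_pow, coeff_monomial]
  by_cases h : i = m * j <;> simp [h, eq_comm]

theorem IsExpMat.map_hasseDeriv {A : Matrix (Fin n) (Fin n) k[X]} (hA : IsExpMat A) (j : ℕ) :
    A.map (hasseDeriv j) = A * (A.map (coeff · j)).map C := by
  ext1 s t
  have h := congrArg (coeff · j) (congrFun (congrFun hA.1 s) t)
  simpa [Matrix.mul_apply, coeff_aeval_C_X_add_X, aeval_X_left_eq_map, finsetSum_coeff,
    aeval_C_X] using h

theorem IsExpMat.isDividedPowerSeq_coeff {A : Matrix (Fin n) (Fin n) k[X]} (hA : IsExpMat A) :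
    IsDividedPowerSeq (matPolyEquiv A).coeff where
  zero := by
    ext s t
    simpa [coeff_zero_eq_eval_zero] using congrFun (congrFun hA.2 s) t
  mul_eq i j := by
    ext s t
    have h := congrArg (coeff · i) (congrFun (congrFun (hA.map_hasseDeriv j) s) t)
    simpa [Matrix.mul_apply, hasseDeriv_coeff, finsetSum_coeff,
      Nat.choose_symm_add (a := i)] using h.symm

end ExponentialMatrix

theorem stmt_15_general {k : Type*} [Field k] {p : ℕ} (hp : p.Prime) [CharP k p] {n : ℕ}
    (A : Matrix (Fin n) (Fin n) k[X]) (hA : IsExpMat A) :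
    ∃ r : ℕ, 1 ≤ r ∧ ∃ N : Fin r → Matrix (Fin n) (Fin n) k,
      (∀ i, N i ^ p = 0) ∧ (∀ i j, Commute (N i) (N j)) ∧
      A = (List.ofFn (fun i : Fin r => expT k n p (p ^ (i : ℕ)) (N i))).prod := by
  have : Fact p.Prime := ⟨hp⟩
  have hpM := natCast_eq_zero_of_algebra k (Matrix (Fin n) (Fin n) k) p
  have hcoeff := hA.isDividedPowerSeq_coeff
  set P := matPolyEquiv A with hP
  have hdeg : P.natDegree < p ^ (P.natDegree + 1) :=
    (Nat.lt_succ_self _).trans (Nat.lt_pow_self hp.one_lt)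
  refine ⟨P.natDegree + 1, Nat.succ_pos _, fun e ↦ P.coeff (p ^ (e : ℕ)),
    fun e ↦ hcoeff.pow_prime_pow_eq_zero hpM e, fun _ _ ↦ hcoeff.commute _ _, ?_⟩
  apply matPolyEquiv.injective
  rw [map_list_prod, List.map_ofFn, ← hP]
  simpa only [Function.comp_def, matPolyEquiv_expT] using hcoeff.eq_prod_truncExp k hdeg

/-- Over an algebraically closed field of characteristic `p > 0`, every exponential
matrix can be written as `∏_{i=1}^r Exp(T^{p^{i-1}} N_i)` for some `r ≥ 1` and
pairwise commuting `N_i` with `N_i^p = 0`. -/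
theorem stmt_15 {k : Type*} [Field k] [IsAlgClosed k] {p : ℕ} (hp : p.Prime)
    [CharP k p] {n : ℕ}
    (A : Matrix (Fin n) (Fin n) (Polynomial k)) (hA : IsExpMat A) :
    ∃ r : ℕ, 1 ≤ r ∧ ∃ N : Fin r → Matrix (Fin n) (Fin n) k,
      (∀ i, N i ^ p = 0) ∧ (∀ i j, Commute (N i) (N j)) ∧
      A = (List.ofFn (fun i : Fin r => expT k n p (p ^ (i : ℕ)) (N i))).prod :=
  stmt_15_general hp A hA
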